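/- arXiv:1911.09995 — 2 statements merged into one kernel-verified Lean document; each statement's English description precedes it below -/
import Mathlib

section
/- Let κ₀ ∈ (0,1), let r : (0,κ₀] → (0,1) be continuous and increasing with lim_{κ→0⁺} κ/r(κ) = 0, let ξ : (0,κ₀] → (0,1) be increasing, let f : [0,∞) → [0,∞) be continuous and increasing with f(0) = 0, and let C₁ ≥ 1, C₂ ≥ 1. Suppose that for every κ ∈ (0,κ₀] there exist functions E_κ, D_κ : [0,∞) → [0,∞) with E_κ(0) > 0 such that: (i) E_κ(t) + 2 D_κ(t) = E_κ(0) for all t ≥ 0 (energy equality); (ii) E_κ(t) ≤ C₁ e^{−r(κ) t} E_κ(0) for all t ≥ 0 (enhanced diffusion estimate); and (iii) D_κ(t) ≤ f(ξ(κ) t) E_κ(0) for all 0 ≤ t ≤ 1/(C₂ ξ(κ)) (dissipation upper bound). Then liminf_{κ→0⁺} ξ(κ)/r(κ) > 0, i.e. there exist c > 0 and κ₁ ∈ (0,κ₀] with ξ(κ)/r(κ) ≥ c for all κ ∈ (0,κ₁]. -/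
/-!
At the time `t = δ / ξ κ`, where `δ > 0` is chosen (by continuity of `f` at `0`) so small that
`f δ < 1/4` and `δ ≤ 1 / C₂`, less than half of the initial energy has been dissipated, so
`1/2 < C₁ * exp (-(r κ) * δ / ξ κ)`. Since `x ≤ exp x`, this gives `r κ * δ / ξ κ ≤ 2 * C₁`, that is
`ξ κ / r κ ≥ δ / (2 * C₁)`, for every `κ ∈ (0, κ₀]`.
-/

open Real Set Filter

/-- Abstract lemma: an energy equality, an enhanced-diffusion decay
estimate at rate `r(κ)`, and a dissipation upper bound on the time-scale `1/ξ(κ)`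
together force `liminf_{κ→0⁺} ξ(κ)/r(κ) > 0`. -/
theorem dissipation_bound_constrains_rate
    (κ₀ : ℝ) (hκ₀ : κ₀ ∈ Ioo (0:ℝ) 1)
    (r : ℝ → ℝ) (hr_cont : ContinuousOn r (Ioc 0 κ₀)) (hr_mono : MonotoneOn r (Ioc 0 κ₀))
    (hr_mem : ∀ κ ∈ Ioc (0:ℝ) κ₀, r κ ∈ Ioo (0:ℝ) 1)
    (hr_lim : Tendsto (fun κ => κ / r κ) (nhdsWithin 0 (Ioi 0)) (nhds 0))
    (ξ : ℝ → ℝ) (hξ_mono : MonotoneOn ξ (Ioc 0 κ₀))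
    (hξ_mem : ∀ κ ∈ Ioc (0:ℝ) κ₀, ξ κ ∈ Ioo (0:ℝ) 1)
    (f : ℝ → ℝ) (hf_cont : ContinuousOn f (Ici 0)) (hf_mono : MonotoneOn f (Ici 0))
    (hf_nonneg : ∀ s, 0 ≤ s → 0 ≤ f s) (hf_zero : f 0 = 0)
    (C₁ C₂ : ℝ) (hC₁ : 1 ≤ C₁) (hC₂ : 1 ≤ C₂)
    (h : ∀ κ ∈ Ioc (0:ℝ) κ₀, ∃ E D : ℝ → ℝ,
      (∀ t, 0 ≤ t → 0 ≤ E t) ∧ (∀ t, 0 ≤ t → 0 ≤ D t) ∧ 0 < E 0 ∧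
      (∀ t, 0 ≤ t → E t + 2 * D t = E 0) ∧
      (∀ t, 0 ≤ t → E t ≤ C₁ * Real.exp (-(r κ) * t) * E 0) ∧
      (∀ t, 0 ≤ t → t ≤ 1 / (C₂ * ξ κ) → D t ≤ f (ξ κ * t) * E 0)) :
    ∃ c : ℝ, 0 < c ∧ ∃ κ₁ : ℝ, 0 < κ₁ ∧ κ₁ ≤ κ₀ ∧
      ∀ κ : ℝ, 0 < κ → κ ≤ κ₁ → c ≤ ξ κ / r κ := by
  -- `δ` is a rescaled time at which `f` is below `1/4`, inside the window of the dissipation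
  -- upper bound.
  obtain ⟨δ, hδ, hδC, hfδ⟩ : ∃ δ : ℝ, 0 < δ ∧ δ ≤ 1 / C₂ ∧ f δ < 1 / 4 := by
    obtain ⟨ε, hε, hball⟩ := Metric.continuousWithinAt_iff.1
      (hf_cont 0 (mem_Ici.2 le_rfl)) (1 / 4) (by norm_num)
    have hC₂inv : 0 < 1 / C₂ := by positivity
    have hpos : 0 < min (ε / 2) (1 / C₂) := lt_min (half_pos hε) hC₂inv
    refine ⟨min (ε / 2) (1 / C₂), hpos, min_le_right _ _, ?_⟩
    have hlt : min (ε / 2) (1 / C₂) < ε := (min_le_left _ _).trans_lt (half_lt_self hε)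
    have hd := hball (mem_Ici.2 hpos.le)
      (by rw [Real.dist_eq, sub_zero, abs_of_pos hpos]; exact hlt)
    rw [hf_zero, Real.dist_eq, sub_zero] at hd
    exact (le_abs_self _).trans_lt hd
  have hC₁pos : 0 < C₁ := by linarith
  refine ⟨δ / (2 * C₁), by positivity, κ₀, hκ₀.1, le_rfl, fun κ hκ hκκ₀ => ?_⟩
  obtain ⟨E, D, -, -, hE0, hen, hdecay, hdiss⟩ := h κ ⟨hκ, hκκ₀⟩
  have hr := (hr_mem κ ⟨hκ, hκκ₀⟩).1
  have hξ := (hξ_mem κ ⟨hκ, hκκ₀⟩).1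
  have ht : 0 ≤ δ / ξ κ := by positivity
  have hwindow : δ / ξ κ ≤ 1 / (C₂ * ξ κ) := by
    rw [← div_div]
    gcongr
  have h1 := hen _ ht
  have h2 := hdecay _ ht
  have h3 := hdiss _ ht hwindow
  rw [mul_div_cancel₀ δ hξ.ne'] at h3
  have hhalf : 1 / 2 < C₁ * Real.exp (-(r κ) * (δ / ξ κ)) := by
    have h4 : f δ * E 0 < 1 / 4 * E 0 := mul_lt_mul_of_pos_right hfδ hE0
    exact lt_of_mul_lt_mul_right (by linarith) hE0.le
  set x := r κ * (δ / ξ κ) with hx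
  rw [neg_mul, ← hx, Real.exp_neg, ← div_eq_mul_inv, lt_div_iff₀ (Real.exp_pos x)] at hhalf
  have hxle : x ≤ 2 * C₁ := by linarith [Real.add_one_le_exp x]
  rw [hx, ← mul_div_assoc, div_le_iff₀ hξ] at hxle
  rw [div_le_div_iff₀ (by positivity) hr]
  linarith
end

section
/- Let n ≥ 1 be an integer, δ ∈ {0,1}, L > 0, and let u : ℝ → ℝ be a continuous 2π-periodic function with |u(z) − u(0)| ≤ L |z|ⁿ for all z ∈ ℝ. Set β = 1/(n+2). There exists a constant C ≥ 1, depending only on n, L and δ, such that for every κ ∈ (0,1), every solution ρ of the shear advection–diffusion equation with initial datum ρ₀(x,y) = φ_{κ,β}(y) sin x satisfies κ ∫₀ᵗ ‖∇_δ ρ(s)‖²_{L²} ds ≤ C ‖ρ₀‖²_{L²} ( κ^{n/(n+2)} t + (κ^{n/(n+2)} t)² + (κ^{n/(n+2)} t)^{n+2} ) for all t ≥ 0. -/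
/-!
The solution is compared with the profile `Ψ(t,x,y) = φ(y) sin(x - u(0) t)`, which is the datum
carried rigidly at the speed `u(0)`. Put `a = κ^β` and `q = κ^{n/(n+2)}`, so that `aⁿ = q` and
`κ / a² = q`, and let `w = ρ - Ψ` and `E = ‖ρ₀‖²`.

For `t > 0` the time derivative of `‖w‖²` is `2 ∬ w (∂ₜρ - ∂ₜΨ)`. The transport term `u w ∂ₓw`
integrates to zero in `x`. The mismatch of the velocities contributes `-2 ∬ ρ (u - u(0)) ∂ₓΨ`,
at most `2 L q E`, because `|u - u(0)| ≤ L aⁿ` on the support of the tent and `‖ρ(t)‖² ≤ E`.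
The diffusion, integrated by parts once against `w` and estimated by Young's inequality, contributes
at most `-κ ‖∇_δ ρ‖² + κ ‖∇_δ Ψ‖²`, where `κ ‖∇_δ Ψ‖² ≤ 7 q E`. Since `w(0) = 0` and `‖w‖² ≥ 0`,
integrating in time yields `κ ∫₀ᵗ ‖∇_δ ρ‖² ≤ (2L + 7) q t E`, which is already the claim: only its
linear term is needed.

`slice_bound` is the estimate at a fixed time, `IsShearSolution.hasDerivAt_distSq` the
differentiation under the integral, `IsShearSolution.l2normSq_le` the energy decay (the case
`φ = 0` of the same inequality) and `IsShearSolution.dissipation_le` the integration in time. The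
tent is not differentiable, but it has a right derivative everywhere, which suffices for the
integration by parts. Joint continuity of `∂ₓρ` and `∂ᵧρ` is not among the defining properties of a
solution; it follows from that of `ρ` and of the second derivatives (`continuous_first_deriv`).
-/

open MeasureTheory Real Set Filter

noncomputable section

/-- `ρ : ℝ → ℝ → ℝ → ℝ`, as `ρ t x y`, is a solution of the shear advection–diffusion
equation `∂ₜρ + u(y) ∂ₓρ = κ (δ ∂ₓₓρ + ∂ᵧᵧρ)` on `[0,∞) × 𝕋²` (2π-periodic in `x` and `y`),
continuous up to `t = 0`, C¹ in time and C² in space for `t > 0`. -/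
structure IsShearSolution (δ κ : ℝ) (u : ℝ → ℝ) (ρ : ℝ → ℝ → ℝ → ℝ) : Prop where
  cont : ContinuousOn (fun p : ℝ × ℝ × ℝ => ρ p.1 p.2.1 p.2.2) {p : ℝ × ℝ × ℝ | 0 ≤ p.1}
  periodic_x : ∀ t x y, ρ t (x + 2 * π) y = ρ t x y
  periodic_y : ∀ t x y, ρ t x (y + 2 * π) = ρ t x y
  diff_t : ∀ t, 0 < t → ∀ x y, DifferentiableAt ℝ (fun s => ρ s x y) t
  diff_x : ∀ t, 0 < t → ∀ x y, DifferentiableAt ℝ (fun a => ρ t a y) x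
  diff_xx : ∀ t, 0 < t → ∀ x y, DifferentiableAt ℝ (fun a => deriv (fun b => ρ t b y) a) x
  diff_y : ∀ t, 0 < t → ∀ x y, DifferentiableAt ℝ (fun b => ρ t x b) y
  diff_yy : ∀ t, 0 < t → ∀ x y, DifferentiableAt ℝ (fun b => deriv (fun c => ρ t x c) b) y
  cont_dt : ContinuousOn (fun p : ℝ × ℝ × ℝ => deriv (fun s => ρ s p.2.1 p.2.2) p.1)
      {p : ℝ × ℝ × ℝ | 0 < p.1}
  cont_dxx : ContinuousOn
      (fun p : ℝ × ℝ × ℝ => deriv (fun a => deriv (fun b => ρ p.1 b p.2.2) a) p.2.1)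
      {p : ℝ × ℝ × ℝ | 0 < p.1}
  cont_dyy : ContinuousOn
      (fun p : ℝ × ℝ × ℝ => deriv (fun b => deriv (fun c => ρ p.1 p.2.1 c) b) p.2.2)
      {p : ℝ × ℝ × ℝ | 0 < p.1}
  pde : ∀ t, 0 < t → ∀ x y,
    deriv (fun s => ρ s x y) t + u y * deriv (fun a => ρ t a y) x =
      κ * (δ * deriv (fun a => deriv (fun b => ρ t b y) a) x +
        deriv (fun b => deriv (fun c => ρ t x c) b) y)

/-- The squared `L²` norm of `ρ(t)` on the torus `[0,2π]²`. -/
def l2normSq (ρ : ℝ → ℝ → ℝ → ℝ) (t : ℝ) : ℝ :=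
  ∫ x in (0:ℝ)..(2 * π), ∫ y in (0:ℝ)..(2 * π), (ρ t x y) ^ 2

/-- The squared `L²` norm of the (partial) gradient `∇_δ ρ(t) = (δ ∂ₓρ, ∂ᵧρ)` on the torus. -/
def gradDeltaNormSq (δ : ℝ) (ρ : ℝ → ℝ → ℝ → ℝ) (t : ℝ) : ℝ :=
  ∫ x in (0:ℝ)..(2 * π), ∫ y in (0:ℝ)..(2 * π),
    (δ * (deriv (fun a => ρ t a y) x) ^ 2 + (deriv (fun b => ρ t x b) y) ^ 2)

/-- Reduction of `y` to the fundamental domain `[-π, π)`. -/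
def mod2pi (y : ℝ) : ℝ := y - 2 * π * ⌊(y + π) / (2 * π)⌋

/-- The 2π-periodic tent function `φ_{κ,β}`: equal to `(κ^β - |y|)/κ^β` for `|y| ≤ κ^β`
(within the fundamental domain) and `0` elsewhere. -/
def tentPer (κ β : ℝ) (y : ℝ) : ℝ :=
  if |mod2pi y| ≤ κ ^ β then (κ ^ β - |mod2pi y|) / κ ^ β else 0

/-! ### Integration over the torus -/

/-- The iterated integral of `f` over the fundamental domain `[0,2π]²`. -/
def torusInt (f : ℝ → ℝ → ℝ) : ℝ :=
  ∫ x in (0:ℝ)..(2 * π), ∫ y in (0:ℝ)..(2 * π), f x y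

lemma continuous_paramInt {X : Type*} [TopologicalSpace X] {f : X → ℝ → ℝ}
    (hf : Continuous fun p : X × ℝ => f p.1 p.2) (a b : ℝ) :
    Continuous fun x => ∫ y in a..b, f x y :=
  intervalIntegral.continuous_parametric_intervalIntegral_of_continuous' hf a b

lemma cont_slice {f : ℝ → ℝ → ℝ} (hf : Continuous fun p : ℝ × ℝ => f p.1 p.2) (x : ℝ) :
    Continuous fun y => f x y :=
  hf.comp (continuous_const.prodMk continuous_id)

lemma cont_slice' {f : ℝ → ℝ → ℝ} (hf : Continuous fun p : ℝ × ℝ => f p.1 p.2) (y : ℝ) :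
    Continuous fun x => f x y :=
  hf.comp (continuous_id.prodMk continuous_const)

lemma torusInt_add {f g : ℝ → ℝ → ℝ} (hf : Continuous fun p : ℝ × ℝ => f p.1 p.2)
    (hg : Continuous fun p : ℝ × ℝ => g p.1 p.2) :
    torusInt (fun x y => f x y + g x y) = torusInt f + torusInt g := by
  unfold torusInt
  rw [← intervalIntegral.integral_add ((continuous_paramInt hf _ _).intervalIntegrable _ _)
    ((continuous_paramInt hg _ _).intervalIntegrable _ _)]
  refine intervalIntegral.integral_congr fun x _ => ?_
  exact intervalIntegral.integral_add ((cont_slice hf x).intervalIntegrable _ _)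
    ((cont_slice hg x).intervalIntegrable _ _)

lemma torusInt_const_mul (c : ℝ) (f : ℝ → ℝ → ℝ) :
    torusInt (fun x y => c * f x y) = c * torusInt f := by
  simp [torusInt]

lemma torusInt_mono {f g : ℝ → ℝ → ℝ} (hf : Continuous fun p : ℝ × ℝ => f p.1 p.2)
    (hg : Continuous fun p : ℝ × ℝ => g p.1 p.2)
    (h : ∀ x, ∀ y ∈ Icc 0 (2 * π), f x y ≤ g x y) : torusInt f ≤ torusInt g := by
  refine intervalIntegral.integral_mono (by positivity)
    ((continuous_paramInt hf _ _).intervalIntegrable _ _)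
    ((continuous_paramInt hg _ _).intervalIntegrable _ _) fun x => ?_
  exact intervalIntegral.integral_mono_on (by positivity) ((cont_slice hf x).intervalIntegrable _ _)
    ((cont_slice hg x).intervalIntegrable _ _) (h x)

lemma torusInt_nonneg {f : ℝ → ℝ → ℝ} (h : ∀ x y, 0 ≤ f x y) : 0 ≤ torusInt f :=
  intervalIntegral.integral_nonneg_of_forall (by positivity) fun x =>
    intervalIntegral.integral_nonneg_of_forall (by positivity) (h x)

lemma torusInt_eq_zero_of_x {f : ℝ → ℝ → ℝ} (hf : Continuous fun p : ℝ × ℝ => f p.1 p.2)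
    (h : ∀ y, ∫ x in (0:ℝ)..(2 * π), f x y = 0) : torusInt f = 0 := by
  unfold torusInt
  rw [intervalIntegral_intervalIntegral_swap]
  · simp [h]
  · refine (hf.continuousOn.integrableOn_compact
      (isCompact_uIcc.prod isCompact_uIcc)).mono_set
        (Set.prod_mono uIoc_subset_uIcc uIoc_subset_uIcc)

lemma integral_sin_sq_shift (θ : ℝ) : ∫ x in (0:ℝ)..(2 * π), sin (x - θ) ^ 2 = π := by
  rw [intervalIntegral.integral_comp_sub_right (fun x => sin x ^ 2), integral_sin_sq,
    show 2 * π - θ = 2 * π + (0 - θ) by ring, add_comm (2 * π) (0 - θ), sin_add_two_pi,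
    cos_add_two_pi]
  ring

lemma integral_cos_sq_shift (θ : ℝ) : ∫ x in (0:ℝ)..(2 * π), cos (x - θ) ^ 2 = π := by
  rw [intervalIntegral.integral_comp_sub_right (fun x => cos x ^ 2), integral_cos_sq,
    show 2 * π - θ = 2 * π + (0 - θ) by ring, add_comm (2 * π) (0 - θ), sin_add_two_pi,
    cos_add_two_pi]
  ring

lemma torusInt_sep_cos (θ : ℝ) (φ : ℝ → ℝ) :
    torusInt (fun x y => φ y ^ 2 * cos (x - θ) ^ 2) = π * ∫ y in (0:ℝ)..(2 * π), φ y ^ 2 := by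
  unfold torusInt
  simp_rw [intervalIntegral.integral_mul_const, intervalIntegral.integral_const_mul]
  rw [integral_cos_sq_shift, mul_comm]

lemma torusInt_sep_sin (θ : ℝ) (φ : ℝ → ℝ) :
    torusInt (fun x y => φ y ^ 2 * sin (x - θ) ^ 2) = π * ∫ y in (0:ℝ)..(2 * π), φ y ^ 2 := by
  unfold torusInt
  simp_rw [intervalIntegral.integral_mul_const, intervalIntegral.integral_const_mul]
  rw [integral_sin_sq_shift, mul_comm]

/-! ### The dissipation inequality at a fixed time -/

/-- Weak form of `∂ᵧᵧ` on a vertical line: for a periodic profile `φ` with right derivative `ψ`,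
integration by parts followed by Young's inequality. -/
lemma line_y_bound {φ ψ f f' f'' : ℝ → ℝ} (s : ℝ) (hφ : Continuous φ)
    (hφp : φ (2 * π) = φ 0)
    (hφd : ∀ y ∈ Ioo 0 (2 * π), HasDerivWithinAt φ (ψ y) (Ioi y) y)
    (hψ : IntervalIntegrable ψ volume 0 (2 * π))
    (hψ2 : IntervalIntegrable (fun y => ψ y ^ 2) volume 0 (2 * π))
    (hf'' : Continuous f'')
    (hd : ∀ y, HasDerivAt f (f' y) y) (hd' : ∀ y, HasDerivAt f' (f'' y) y)
    (hp : f (2 * π) = f 0) (hp' : f' (2 * π) = f' 0) :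
    ∫ y in (0:ℝ)..(2 * π), (f y - φ y * s) * f'' y ≤
      -(1 / 2) * (∫ y in (0:ℝ)..(2 * π), f' y ^ 2) +
        (1 / 2) * (s ^ 2 * ∫ y in (0:ℝ)..(2 * π), ψ y ^ 2) := by
  have hfc : Continuous f := continuous_iff_continuousAt.2 fun y => (hd y).continuousAt
  have hfc' : Continuous f' := continuous_iff_continuousAt.2 fun y => (hd' y).continuousAt
  have h2π : (0:ℝ) ≤ 2 * π := by positivity
  have key := intervalIntegral.integral_mul_deriv_eq_deriv_mul_of_hasDeriv_right
    (a := 0) (b := 2 * π) (u := fun y => f y - φ y * s) (u' := fun y => f' y - ψ y * s)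
    (v := f') (v' := f'') (by fun_prop) (by fun_prop)
    (fun y hy => by
      rw [min_eq_left h2π, max_eq_right h2π] at hy
      exact (hd y).hasDerivWithinAt.sub ((hφd y hy).mul_const s))
    (fun y _ => (hd' y).hasDerivWithinAt)
    ((hfc'.intervalIntegrable _ _).sub (hψ.mul_const s)) (hf''.intervalIntegrable _ _)
  rw [key, hp, hp', hφp, sub_self, zero_sub, ← intervalIntegral.integral_neg,
    ← intervalIntegral.integral_const_mul, ← intervalIntegral.integral_const_mul,
    ← intervalIntegral.integral_const_mul, ← intervalIntegral.integral_add]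
  · refine intervalIntegral.integral_mono h2π ?_ ?_ fun y => ?_
    · exact (((hfc'.intervalIntegrable _ _).sub (hψ.mul_const s)).mul_continuousOn
        hfc'.continuousOn).neg
    · exact ((by fun_prop : Continuous fun y => -(1 / 2) * f' y ^ 2).intervalIntegrable _ _).add
        ((hψ2.const_mul _).const_mul _)
    · show -((f' y - ψ y * s) * f' y) ≤ _
      nlinarith [sq_nonneg (f' y - s * ψ y)]
  · exact (by fun_prop : Continuous fun y => -(1 / 2) * f' y ^ 2).intervalIntegrable _ _
  · exact (hψ2.const_mul _).const_mul _

/-- The dissipation inequality at one instant. Here `r` is the solution, `φ(y) sin(x - θ)` the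
transported profile, and the left-hand side is the time derivative of the squared `L²` distance
between them. The terms that are `x`-derivatives of periodic functions integrate to zero. -/
lemma slice_bound {δ κ c M θ : ℝ} (hδ : 0 ≤ δ) (hκ : 0 ≤ κ) (hM : 0 ≤ M)
    {u φ ψ : ℝ → ℝ} {r rt rx rxx ry ryy : ℝ → ℝ → ℝ} (hu : Continuous u) (hφ : Continuous φ)
    (hφp : φ (2 * π) = φ 0)
    (hφd : ∀ y ∈ Ioo 0 (2 * π), HasDerivWithinAt φ (ψ y) (Ioi y) y)
    (hψ : IntervalIntegrable ψ volume 0 (2 * π))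
    (hψ2 : IntervalIntegrable (fun y => ψ y ^ 2) volume 0 (2 * π))
    (huφ : ∀ y ∈ Icc 0 (2 * π), |u y - c| * |φ y| ≤ M * |φ y|)
    (hr : Continuous fun p : ℝ × ℝ => r p.1 p.2) (hrt : Continuous fun p : ℝ × ℝ => rt p.1 p.2)
    (hrx : Continuous fun p : ℝ × ℝ => rx p.1 p.2)
    (hrxx : Continuous fun p : ℝ × ℝ => rxx p.1 p.2)
    (hry : Continuous fun p : ℝ × ℝ => ry p.1 p.2)
    (hryy : Continuous fun p : ℝ × ℝ => ryy p.1 p.2)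
    (dx : ∀ x y, HasDerivAt (fun a => r a y) (rx x y) x)
    (dxx : ∀ x y, HasDerivAt (fun a => rx a y) (rxx x y) x)
    (dy : ∀ x y, HasDerivAt (fun b => r x b) (ry x y) y)
    (dyy : ∀ x y, HasDerivAt (fun b => ry x b) (ryy x y) y)
    (px : ∀ y, r (2 * π) y = r 0 y) (px' : ∀ y, rx (2 * π) y = rx 0 y)
    (py : ∀ x, r x (2 * π) = r x 0) (py' : ∀ x, ry x (2 * π) = ry x 0)
    (pde : ∀ x y, rt x y + u y * rx x y = κ * (δ * rxx x y + ryy x y)) :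
    torusInt (fun x y => 2 * (r x y - φ y * sin (x - θ)) * (rt x y + c * (φ y * cos (x - θ)))) ≤
      -(κ * torusInt (fun x y => δ * rx x y ^ 2 + ry x y ^ 2)) +
        M * torusInt (fun x y => r x y ^ 2) +
        (M + κ * δ) * (π * ∫ y in (0:ℝ)..(2 * π), φ y ^ 2) +
        κ * (π * ∫ y in (0:ℝ)..(2 * π), ψ y ^ 2) := by
  -- `A` is the `x`-derivative of `-u w² + (u - c) Ψ² + 2κδ w ∂ₓr`, with `Ψ` the profile, `w = r - Ψ`.
  set A : ℝ → ℝ → ℝ := fun x y =>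
    -(u y) * (2 * (r x y - φ y * sin (x - θ)) * (rx x y - φ y * cos (x - θ))) +
      (u y - c) * (2 * (φ y * sin (x - θ)) * (φ y * cos (x - θ))) +
      2 * κ * δ * ((rx x y - φ y * cos (x - θ)) * rx x y +
        (r x y - φ y * sin (x - θ)) * rxx x y) with hA
  have hAc : Continuous fun p : ℝ × ℝ => A p.1 p.2 := by
    simp only [hA]; fun_prop
  have hA0 : torusInt A = 0 := by
    refine torusInt_eq_zero_of_x hAc fun y => ?_
    have hs : ∀ x : ℝ, HasDerivAt (fun a => φ y * sin (a - θ)) (φ y * cos (x - θ)) x := fun x => by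
      have := ((hasDerivAt_id x).sub_const θ).sin.const_mul (φ y)
      simpa using this
    rw [intervalIntegral.integral_eq_sub_of_hasDerivAt
      (f := fun x => -(u y) * (r x y - φ y * sin (x - θ)) ^ 2 +
        (u y - c) * (φ y * sin (x - θ)) ^ 2 +
        2 * κ * δ * ((r x y - φ y * sin (x - θ)) * rx x y))]
    · have : sin (2 * π - θ) = sin (0 - θ) := by
        rw [show 2 * π - θ = (0 - θ) + 2 * π by ring, sin_add_two_pi]
      simp only [px, px', this]; ring
    · intro x _
      have hw := (dx x y).sub (hs x)
      have := (((hw.pow 2).const_mul (-(u y))).add (((hs x).pow 2).const_mul (u y - c))).add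
        ((hw.mul (dxx x y)).const_mul (2 * κ * δ))
      refine this.congr_deriv ?_
      simp only [hA, Pi.sub_apply]; push_cast; ring
    · exact (cont_slice' hAc y).intervalIntegrable _ _
  have hWyy : torusInt (fun x y => (r x y - φ y * sin (x - θ)) * ryy x y) ≤
      -(1 / 2) * torusInt (fun x y => ry x y ^ 2) +
        (1 / 2) * (π * ∫ y in (0:ℝ)..(2 * π), ψ y ^ 2) := by
    have e : torusInt (fun x y => ψ y ^ 2 * sin (x - θ) ^ 2) =
        ∫ x in (0:ℝ)..(2 * π), sin (x - θ) ^ 2 * ∫ y in (0:ℝ)..(2 * π), ψ y ^ 2 := by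
      simp only [torusInt, intervalIntegral.integral_mul_const]
      simp [mul_comm]
    have hry2 : Continuous fun x => ∫ y in (0:ℝ)..(2 * π), ry x y ^ 2 :=
      continuous_paramInt (by fun_prop) _ _
    rw [← torusInt_sep_sin θ ψ, e]
    unfold torusInt
    rw [← intervalIntegral.integral_const_mul, ← intervalIntegral.integral_const_mul,
      ← intervalIntegral.integral_add]
    · refine intervalIntegral.integral_mono (by positivity) ?_ ?_ fun x => ?_
      · exact (continuous_paramInt (f := fun x y => (r x y - φ y * sin (x - θ)) * ryy x y)
          (by fun_prop) _ _).intervalIntegrable _ _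
      · exact (by fun_prop : Continuous fun x => -(1 / 2) * (∫ y in (0:ℝ)..(2 * π), ry x y ^ 2) +
          1 / 2 * (sin (x - θ) ^ 2 * ∫ y in (0:ℝ)..(2 * π), ψ y ^ 2)).intervalIntegrable _ _
      · exact line_y_bound _ hφ hφp hφd hψ hψ2 (cont_slice hryy x) (dy x) (dyy x) (py x) (py' x)
    · exact (by fun_prop : Continuous fun x =>
        -(1 / 2) * (∫ y in (0:ℝ)..(2 * π), ry x y ^ 2)).intervalIntegrable _ _
    · exact (by fun_prop : Continuous fun x =>
        1 / 2 * (sin (x - θ) ^ 2 * ∫ y in (0:ℝ)..(2 * π), ψ y ^ 2)).intervalIntegrable _ _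
  have hmono : torusInt (fun x y =>
      2 * (r x y - φ y * sin (x - θ)) * (rt x y + c * (φ y * cos (x - θ)))) ≤
      torusInt (fun x y => A x y + (M * r x y ^ 2 + ((M + κ * δ) * (φ y ^ 2 * cos (x - θ) ^ 2) +
        (-(κ * δ) * rx x y ^ 2 + 2 * κ * ((r x y - φ y * sin (x - θ)) * ryy x y))))) := by
    refine torusInt_mono (by fun_prop) (by fun_prop) fun x y hy => ?_
    have hrt' : rt x y = κ * (δ * rxx x y + ryy x y) - u y * rx x y := by linarith [pde x y]
    have h1 : -(2 * r x y * ((u y - c) * φ y) * cos (x - θ)) ≤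
        M * (r x y ^ 2 + φ y ^ 2 * cos (x - θ) ^ 2) := by
      calc -(2 * r x y * ((u y - c) * φ y) * cos (x - θ))
          ≤ |2 * r x y * ((u y - c) * φ y) * cos (x - θ)| := neg_le_abs _
        _ = 2 * |r x y| * (|u y - c| * |φ y|) * |cos (x - θ)| := by
            simp [abs_mul]
        _ ≤ 2 * |r x y| * (M * |φ y|) * |cos (x - θ)| := by
            gcongr 2 * |r x y| * ?_ * |cos (x - θ)|; exact huφ y hy
        _ = M * (2 * |r x y| * (|φ y| * |cos (x - θ)|)) := by ring
        _ ≤ M * (|r x y| ^ 2 + (|φ y| * |cos (x - θ)|) ^ 2) := by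
            gcongr; exact two_mul_le_add_sq _ _
        _ = _ := by rw [mul_pow, sq_abs, sq_abs, sq_abs]
    have h2 : 0 ≤ κ * δ * (rx x y - φ y * cos (x - θ)) ^ 2 := by positivity
    simp only [hA]
    rw [hrt']
    linear_combination h1 + h2
  clear_value A
  refine hmono.trans ?_
  rw [torusInt_add hAc (by fun_prop), torusInt_add (by fun_prop) (by fun_prop),
    torusInt_add (by fun_prop) (by fun_prop), torusInt_add (by fun_prop) (by fun_prop),
    torusInt_const_mul, torusInt_const_mul, torusInt_const_mul, torusInt_const_mul,
    torusInt_sep_cos, hA0, torusInt_add (by fun_prop) (by fun_prop), torusInt_const_mul]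
  linear_combination 2 * κ * hWyy

/-! ### Regularity in time -/

lemma contOn_pos_iff {Y : Type*} [TopologicalSpace Y] (f : ℝ → Y → ℝ) :
    ContinuousOn (fun p : ℝ × Y => f p.1 p.2) {p | 0 < p.1} ↔
      Continuous fun p : Ioi (0:ℝ) × Y => f p.1 p.2 := by
  constructor
  · intro h
    exact h.comp_continuous (f := fun p : Ioi (0:ℝ) × Y => ((p.1 : ℝ), p.2)) (by fun_prop)
      fun p => p.1.2
  · intro h
    rw [continuousOn_iff_continuous_domRestrict]
    exact h.comp (g := fun p : Ioi (0:ℝ) × Y => f p.1 p.2)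
      (f := fun p : {p : ℝ × Y | 0 < p.1} => (⟨p.1.1, p.2⟩, p.1.2)) (by fun_prop)

/-- Joint continuity of a function and of its second partial derivative gives joint continuity of
the first one, by Taylor's formula
`f' x = f (x + 1) - f x - ∫₀¹ (1 - s) f'' (x + s) ds`. -/
lemma continuous_first_deriv {X : Type*} [TopologicalSpace X] {f f' f'' : X → ℝ → ℝ}
    (hf : Continuous fun p : X × ℝ => f p.1 p.2)
    (hf'' : Continuous fun p : X × ℝ => f'' p.1 p.2)
    (hd : ∀ q x, HasDerivAt (f q) (f' q x) x) (hd' : ∀ q x, HasDerivAt (f' q) (f'' q x) x) :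
    Continuous fun p : X × ℝ => f' p.1 p.2 := by
  have e : ∀ p : X × ℝ, f' p.1 p.2 = f p.1 (p.2 + 1) - f p.1 p.2 -
      ∫ s in (0:ℝ)..1, (1 - s) * f'' p.1 (p.2 + s) := by
    rintro ⟨q, x⟩
    have hc : Continuous fun s : ℝ => (1 - s) * f'' q (x + s) :=
      (by fun_prop : Continuous fun s : ℝ => 1 - s).mul
        (hf''.comp (f := fun s : ℝ => (q, x + s)) (by fun_prop))
    rw [intervalIntegral.integral_eq_sub_of_hasDerivAt
      (f := fun s => (1 - s) * f' q (x + s) + f q (x + s)) _ (hc.intervalIntegrable _ _)]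
    · simp
    · intro s _
      have h1 := (hd q (x + s)).comp_const_add x s
      have h2 := (hd' q (x + s)).comp_const_add x s
      have h3 : HasDerivAt (fun s : ℝ => 1 - s) (-1) s := by
        simpa using (hasDerivAt_id s).const_sub 1
      exact ((h3.mul h2).add h1).congr_deriv (by ring)
  simp_rw [e]
  refine ((hf.comp (f := fun p : X × ℝ => (p.1, p.2 + 1)) (by fun_prop)).sub hf).sub ?_
  refine continuous_paramInt (f := fun (p : X × ℝ) s => (1 - s) * f'' p.1 (p.2 + s)) ?_ _ _
  exact (by fun_prop : Continuous fun p : (X × ℝ) × ℝ => 1 - p.2).mul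
    (hf''.comp (f := fun p : (X × ℝ) × ℝ => (p.1.1, p.1.2 + p.2)) (by fun_prop))

lemma hasDerivAt_paramInt {F F' : ℝ → ℝ → ℝ} (a b : ℝ)
    (hF : ∀ t, 0 < t → Continuous (F t))
    (hF' : ContinuousOn (fun p : ℝ × ℝ => F' p.1 p.2) {p | 0 < p.1})
    (hd : ∀ t, 0 < t → ∀ x, HasDerivAt (fun s => F s x) (F' t x) t) {t : ℝ} (ht : 0 < t) :
    HasDerivAt (fun s => ∫ x in a..b, F s x) (∫ x in a..b, F' t x) t := by
  obtain ⟨B, hB⟩ := ((isCompact_Icc (a := t / 2) (b := 2 * t)).prod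
    (isCompact_uIcc (a := a) (b := b))).exists_bound_of_continuousOn
      (hF'.mono fun p hp => by
        have := hp.1.1
        show 0 < p.1
        linarith)
  refine (intervalIntegral.hasDerivAt_integral_of_dominated_loc_of_deriv_le
    (s := Icc (t / 2) (2 * t)) (bound := fun _ => B) (Icc_mem_nhds (by linarith) (by linarith))
    ?_ ((hF t ht).intervalIntegrable _ _) ?_ ?_ intervalIntegrable_const ?_).2
  · filter_upwards [lt_mem_nhds ht] with s hs using (hF s hs).aestronglyMeasurable
  · exact (hF'.comp_continuous (f := fun x : ℝ => (t, x)) (by fun_prop)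
      fun _ => ht).aestronglyMeasurable
  · exact Eventually.of_forall fun x hx s hs => hB (s, x) ⟨hs, uIoc_subset_uIcc hx⟩
  · exact Eventually.of_forall fun x _ s hs => hd s (by linarith [hs.1]) x

lemma continuousOn_torusInt {F : ℝ → ℝ → ℝ → ℝ}
    (hF : ContinuousOn (fun p : ℝ × ℝ × ℝ => F p.1 p.2.1 p.2.2) {p | 0 < p.1}) :
    ContinuousOn (fun t => torusInt (F t)) (Ioi 0) := by
  rw [continuousOn_iff_continuous_domRestrict]
  have h := (contOn_pos_iff (fun t (q : ℝ × ℝ) => F t q.1 q.2)).1 hF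
  refine continuous_paramInt (f := fun (t : Ioi (0:ℝ)) x => ∫ y in (0:ℝ)..(2 * π), F t x y) ?_ _ _
  refine continuous_paramInt (f := fun (p : Ioi (0:ℝ) × ℝ) y => F p.1 p.2 y) ?_ _ _
  exact h.comp (f := fun p : (Ioi (0:ℝ) × ℝ) × ℝ => (p.1.1, p.1.2, p.2)) (by fun_prop)

lemma continuousOn_torusInt_Ici {F : ℝ → ℝ → ℝ → ℝ}
    (hF : ContinuousOn (fun p : ℝ × ℝ × ℝ => F p.1 p.2.1 p.2.2) {p | 0 ≤ p.1}) :
    ContinuousOn (fun t => torusInt (F t)) (Ici 0) := by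
  rw [continuousOn_iff_continuous_domRestrict]
  refine continuous_paramInt (f := fun (t : Ici (0:ℝ)) x => ∫ y in (0:ℝ)..(2 * π), F t x y) ?_ _ _
  refine continuous_paramInt (f := fun (p : Ici (0:ℝ) × ℝ) y => F p.1 p.2 y) ?_ _ _
  exact hF.comp_continuous
    (f := fun p : (Ici (0:ℝ) × ℝ) × ℝ => ((p.1.1 : ℝ), p.1.2, p.2)) (by fun_prop) fun p => p.1.1.2

lemma hasDerivAt_torusInt {F F' : ℝ → ℝ → ℝ → ℝ}
    (hF : ContinuousOn (fun p : ℝ × ℝ × ℝ => F p.1 p.2.1 p.2.2) {p | 0 < p.1})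
    (hF' : ContinuousOn (fun p : ℝ × ℝ × ℝ => F' p.1 p.2.1 p.2.2) {p | 0 < p.1})
    (hd : ∀ t, 0 < t → ∀ x y, HasDerivAt (fun s => F s x y) (F' t x y) t) {t : ℝ} (ht : 0 < t) :
    HasDerivAt (fun s => torusInt (F s)) (torusInt (F' t)) t := by
  have hFt : ∀ t, 0 < t → Continuous fun p : ℝ × ℝ => F t p.1 p.2 := fun t ht =>
    hF.comp_continuous (f := fun p : ℝ × ℝ => (t, p.1, p.2)) (by fun_prop) fun _ => ht
  refine hasDerivAt_paramInt (F := fun t x => ∫ y in (0:ℝ)..(2 * π), F t x y)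
    (F' := fun t x => ∫ y in (0:ℝ)..(2 * π), F' t x y) _ _ (fun t ht => ?_) ?_
    (fun t ht x => ?_) ht
  · exact continuous_paramInt (hFt t ht) _ _
  · rw [contOn_pos_iff (fun t x => ∫ y in (0:ℝ)..(2 * π), F' t x y)]
    refine continuous_paramInt (f := fun (p : Ioi (0:ℝ) × ℝ) y => F' p.1 p.2 y) ?_ _ _
    exact hF'.comp_continuous
      (f := fun p : (Ioi (0:ℝ) × ℝ) × ℝ => ((p.1.1 : ℝ), p.1.2, p.2)) (by fun_prop) fun p => p.1.1.2
  · refine hasDerivAt_paramInt (F := fun t y => F t x y) (F' := fun t y => F' t x y) _ _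
      (fun t ht => cont_slice (hFt t ht) x) ?_ (fun t ht y => hd t ht x y) ht
    exact hF'.comp (f := fun p : ℝ × ℝ => (p.1, x, p.2)) (t := {p | 0 < p.1})
      (by fun_prop) fun p hp => hp

namespace IsShearSolution

variable {δ κ : ℝ} {u : ℝ → ℝ} {ρ : ℝ → ℝ → ℝ → ℝ}

lemma cont_pos (h : IsShearSolution δ κ u ρ) :
    ContinuousOn (fun p : ℝ × ℝ × ℝ => ρ p.1 p.2.1 p.2.2) {p | 0 < p.1} :=
  h.cont.mono fun _ hp => le_of_lt (mem_ofPred_eq ▸ hp)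

lemma cont_dx (h : IsShearSolution δ κ u ρ) :
    ContinuousOn (fun p : ℝ × ℝ × ℝ => deriv (fun a => ρ p.1 a p.2.2) p.2.1) {p | 0 < p.1} := by
  rw [contOn_pos_iff (fun t (q : ℝ × ℝ) => deriv (fun a => ρ t a q.2) q.1)]
  have := continuous_first_deriv (X := Ioi (0:ℝ) × ℝ) (f := fun q x => ρ q.1 x q.2)
    (f' := fun q x => deriv (fun a => ρ q.1 a q.2) x)
    (f'' := fun q x => deriv (fun a => deriv (fun b => ρ q.1 b q.2) a) x)
    (h.cont_pos.comp_continuous (f := fun p : (Ioi (0:ℝ) × ℝ) × ℝ => ((p.1.1 : ℝ), p.2, p.1.2))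
      (by fun_prop) fun p => p.1.1.2)
    (h.cont_dxx.comp_continuous (f := fun p : (Ioi (0:ℝ) × ℝ) × ℝ => ((p.1.1 : ℝ), p.2, p.1.2))
      (by fun_prop) fun p => p.1.1.2)
    (fun q x => (h.diff_x q.1 q.1.2 x q.2).hasDerivAt)
    (fun q x => (h.diff_xx q.1 q.1.2 x q.2).hasDerivAt)
  exact this.comp (f := fun p : Ioi (0:ℝ) × ℝ × ℝ => ((p.1, p.2.2), p.2.1)) (by fun_prop)

lemma cont_dy (h : IsShearSolution δ κ u ρ) :
    ContinuousOn (fun p : ℝ × ℝ × ℝ => deriv (fun b => ρ p.1 p.2.1 b) p.2.2) {p | 0 < p.1} := by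
  rw [contOn_pos_iff (fun t (q : ℝ × ℝ) => deriv (fun b => ρ t q.1 b) q.2)]
  have := continuous_first_deriv (X := Ioi (0:ℝ) × ℝ) (f := fun q y => ρ q.1 q.2 y)
    (f' := fun q y => deriv (fun b => ρ q.1 q.2 b) y)
    (f'' := fun q y => deriv (fun b => deriv (fun c => ρ q.1 q.2 c) b) y)
    (h.cont_pos.comp_continuous (f := fun p : (Ioi (0:ℝ) × ℝ) × ℝ => ((p.1.1 : ℝ), p.1.2, p.2))
      (by fun_prop) fun p => p.1.1.2)
    (h.cont_dyy.comp_continuous (f := fun p : (Ioi (0:ℝ) × ℝ) × ℝ => ((p.1.1 : ℝ), p.1.2, p.2))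
      (by fun_prop) fun p => p.1.1.2)
    (fun q y => (h.diff_y q.1 q.1.2 q.2 y).hasDerivAt)
    (fun q y => (h.diff_yy q.1 q.1.2 q.2 y).hasDerivAt)
  exact this.comp (f := fun p : Ioi (0:ℝ) × ℝ × ℝ => ((p.1, p.2.1), p.2.2)) (by fun_prop)

lemma continuousOn_grad (h : IsShearSolution δ κ u ρ) :
    ContinuousOn (gradDeltaNormSq δ ρ) (Ioi 0) :=
  continuousOn_torusInt (F := fun t x y =>
    δ * (deriv (fun a => ρ t a y) x) ^ 2 + (deriv (fun b => ρ t x b) y) ^ 2)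
    ((h.cont_dx.pow 2).const_mul δ |>.add (h.cont_dy.pow 2))

/-- The squared `L²` distance between `ρ(t)` and the profile `φ(y) sin(x - ct)` travelling at the
constant speed `c`. For `φ = 0` it is the energy of `ρ`. -/
def distSq (ρ : ℝ → ℝ → ℝ → ℝ) (φ : ℝ → ℝ) (c t : ℝ) : ℝ :=
  torusInt fun x y => (ρ t x y - φ y * sin (x - c * t)) ^ 2

lemma continuousOn_distSq (h : IsShearSolution δ κ u ρ) {φ : ℝ → ℝ} (hφ : Continuous φ) (c : ℝ) :
    ContinuousOn (distSq ρ φ c) (Ici 0) :=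
  continuousOn_torusInt_Ici (F := fun t x y => (ρ t x y - φ y * sin (x - c * t)) ^ 2)
    ((h.cont.sub (by fun_prop :
      Continuous fun p : ℝ × ℝ × ℝ => φ p.2.2 * sin (p.2.1 - c * p.1)).continuousOn).pow 2)

lemma hasDerivAt_distSq (h : IsShearSolution δ κ u ρ) {φ : ℝ → ℝ} (hφ : Continuous φ) (c : ℝ)
    {t : ℝ} (ht : 0 < t) :
    HasDerivAt (distSq ρ φ c) (torusInt fun x y => 2 * (ρ t x y - φ y * sin (x - c * t)) *
      (deriv (fun s => ρ s x y) t + c * (φ y * cos (x - c * t)))) t := by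
  have h1 : ContinuousOn (fun p : ℝ × ℝ × ℝ => ρ p.1 p.2.1 p.2.2 -
      φ p.2.2 * sin (p.2.1 - c * p.1)) {p | 0 < p.1} :=
    h.cont_pos.sub (by fun_prop :
      Continuous fun p : ℝ × ℝ × ℝ => φ p.2.2 * sin (p.2.1 - c * p.1)).continuousOn
  refine hasDerivAt_torusInt (F := fun t x y => (ρ t x y - φ y * sin (x - c * t)) ^ 2)
    (F' := fun t x y => 2 * (ρ t x y - φ y * sin (x - c * t)) *
      (deriv (fun s => ρ s x y) t + c * (φ y * cos (x - c * t)))) (h1.pow 2) ?_ ?_ ht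
  · exact (h1.const_mul 2).mul (h.cont_dt.add (by fun_prop : Continuous fun p : ℝ × ℝ × ℝ =>
      c * (φ p.2.2 * cos (p.2.1 - c * p.1))).continuousOn)
  · intro t ht x y
    have hs : HasDerivAt (fun s => φ y * sin (x - c * s)) (φ y * (cos (x - c * t) * -(c * 1))) t :=
      (((hasDerivAt_id t).const_mul c).const_sub x).sin.const_mul (φ y)
    refine (((h.diff_t t ht x y).hasDerivAt.sub hs).pow 2).congr_deriv ?_
    simp only [Pi.sub_apply]; push_cast; ring

lemma deriv_distSq_le (h : IsShearSolution δ κ u ρ) {c M : ℝ} (hδ : 0 ≤ δ) (hκ : 0 ≤ κ)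
    (hM : 0 ≤ M) {φ ψ : ℝ → ℝ} (hu : Continuous u) (hφ : Continuous φ)
    (hφp : φ (2 * π) = φ 0)
    (hφd : ∀ y ∈ Ioo 0 (2 * π), HasDerivWithinAt φ (ψ y) (Ioi y) y)
    (hψ : IntervalIntegrable ψ volume 0 (2 * π))
    (hψ2 : IntervalIntegrable (fun y => ψ y ^ 2) volume 0 (2 * π))
    (huφ : ∀ y ∈ Icc 0 (2 * π), |u y - c| * |φ y| ≤ M * |φ y|) {t : ℝ} (ht : 0 < t) :
    deriv (distSq ρ φ c) t ≤ -(κ * gradDeltaNormSq δ ρ t) + M * l2normSq ρ t +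
      (M + κ * δ) * (π * ∫ y in (0:ℝ)..(2 * π), φ y ^ 2) +
        κ * (π * ∫ y in (0:ℝ)..(2 * π), ψ y ^ 2) := by
  rw [(h.hasDerivAt_distSq hφ c ht).deriv]
  have sl : ∀ {F : ℝ × ℝ × ℝ → ℝ}, ContinuousOn F {p | 0 < p.1} →
      Continuous fun p : ℝ × ℝ => F (t, p.1, p.2) := fun hF =>
    hF.comp_continuous (by fun_prop) fun _ => ht
  have pfx : ∀ y, (fun a => ρ t (a + 2 * π) y) = fun a => ρ t a y := fun y =>
    funext fun a => h.periodic_x t a y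
  have pfy : ∀ x, (fun b => ρ t x (b + 2 * π)) = fun b => ρ t x b := fun x =>
    funext fun b => h.periodic_y t x b
  exact slice_bound hδ hκ hM hu hφ hφp hφd hψ hψ2 huφ
    (r := ρ t) (rt := fun x y => deriv (fun s => ρ s x y) t)
    (rx := fun x y => deriv (fun a => ρ t a y) x)
    (rxx := fun x y => deriv (fun a => deriv (fun b => ρ t b y) a) x)
    (ry := fun x y => deriv (fun b => ρ t x b) y)
    (ryy := fun x y => deriv (fun b => deriv (fun c => ρ t x c) b) y)
    (sl h.cont_pos) (sl h.cont_dt) (sl h.cont_dx) (sl h.cont_dxx) (sl h.cont_dy) (sl h.cont_dyy)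
    (fun x y => (h.diff_x t ht x y).hasDerivAt) (fun x y => (h.diff_xx t ht x y).hasDerivAt)
    (fun x y => (h.diff_y t ht x y).hasDerivAt) (fun x y => (h.diff_yy t ht x y).hasDerivAt)
    (fun y => by simpa using h.periodic_x t 0 y)
    (fun y => by
      have := deriv_comp_add_const (fun a => ρ t a y) (2 * π) 0
      rw [pfx, zero_add] at this
      exact this.symm)
    (fun x => by simpa using h.periodic_y t x 0)
    (fun x => by
      have := deriv_comp_add_const (fun b => ρ t x b) (2 * π) 0
      rw [pfy, zero_add] at this
      exact this.symm)
    (fun x y => h.pde t ht x y)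

lemma gradDeltaNormSq_nonneg (hδ : 0 ≤ δ) (t : ℝ) : 0 ≤ gradDeltaNormSq δ ρ t :=
  torusInt_nonneg fun x y => by positivity

/-- Energy decay, the case `φ = 0` of `deriv_distSq_le`. -/
lemma l2normSq_le (h : IsShearSolution δ κ u ρ) (hδ : 0 ≤ δ) (hκ : 0 ≤ κ) (hu : Continuous u)
    {t : ℝ} (ht : 0 ≤ t) : l2normSq ρ t ≤ l2normSq ρ 0 := by
  have e : ∀ t, distSq ρ (fun _ => 0) 0 t = l2normSq ρ t := fun t => by
    simp [distSq, torusInt, l2normSq]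
  have hanti : AntitoneOn (distSq ρ (fun _ => 0) 0) (Ici 0) := by
    refine antitoneOn_of_deriv_nonpos (convex_Ici 0) (h.continuousOn_distSq continuous_const 0)
      ?_ ?_
    · rw [interior_Ici]
      exact fun s hs => (h.hasDerivAt_distSq continuous_const 0 hs).differentiableAt.differentiableWithinAt
    · rw [interior_Ici]
      intro s hs
      have := h.deriv_distSq_le (c := 0) (M := 0) (φ := fun _ => 0) (ψ := fun _ => 0) hδ hκ le_rfl hu
        continuous_const rfl (fun y _ => hasDerivWithinAt_const _ _ _) intervalIntegrable_const
        intervalIntegrable_const (by simp) hs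
      have := mul_nonneg hκ (gradDeltaNormSq_nonneg (ρ := ρ) hδ s)
      simp at *
      linarith
  rw [← e, ← e]
  exact hanti (mem_Ici.2 le_rfl) (mem_Ici.2 ht) ht

/-- For the datum `φ(y) sin x` the dissipated energy grows at most linearly in time. If the
dissipation is not integrable up to `t = 0`, its integral is the junk value `0`. -/
lemma dissipation_le (h : IsShearSolution δ κ u ρ) {c M : ℝ} (hδ : 0 ≤ δ) (hκ : 0 ≤ κ)
    (hM : 0 ≤ M) {φ ψ : ℝ → ℝ} (hu : Continuous u) (hφ : Continuous φ)
    (hφp : φ (2 * π) = φ 0)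
    (hφd : ∀ y ∈ Ioo 0 (2 * π), HasDerivWithinAt φ (ψ y) (Ioi y) y)
    (hψ : IntervalIntegrable ψ volume 0 (2 * π))
    (hψ2 : IntervalIntegrable (fun y => ψ y ^ 2) volume 0 (2 * π))
    (huφ : ∀ y ∈ Icc 0 (2 * π), |u y - c| * |φ y| ≤ M * |φ y|)
    (h0 : ∀ x, ∀ y ∈ Icc 0 (2 * π), ρ 0 x y = φ y * sin x) {t : ℝ} (ht : 0 ≤ t) :
    κ * ∫ s in (0:ℝ)..t, gradDeltaNormSq δ ρ s ≤
      ((2 * M + κ * δ) * l2normSq ρ 0 + κ * (π * ∫ y in (0:ℝ)..(2 * π), ψ y ^ 2)) * t := by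
  have h2π : (0:ℝ) ≤ 2 * π := by positivity
  have hE : l2normSq ρ 0 = π * ∫ y in (0:ℝ)..(2 * π), φ y ^ 2 := by
    rw [← torusInt_sep_sin 0 φ]
    refine intervalIntegral.integral_congr fun x _ => intervalIntegral.integral_congr fun y hy => ?_
    rw [uIcc_of_le h2π] at hy
    simp only [h0 x y hy, sub_zero]; ring
  set K := (2 * M + κ * δ) * l2normSq ρ 0 + κ * (π * ∫ y in (0:ℝ)..(2 * π), ψ y ^ 2) with hK
  have hE0 : 0 ≤ l2normSq ρ 0 := torusInt_nonneg fun x y => sq_nonneg _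
  have hP0 : 0 ≤ ∫ y in (0:ℝ)..(2 * π), ψ y ^ 2 :=
    intervalIntegral.integral_nonneg_of_forall h2π fun y => sq_nonneg _
  have hK0 : 0 ≤ K := by positivity
  by_cases hint : IntervalIntegrable (gradDeltaNormSq δ ρ) volume 0 t
  swap
  · rw [intervalIntegral.integral_undef hint, mul_zero]; positivity
  have hd0 : distSq ρ φ c 0 = 0 := by
    have : distSq ρ φ c 0 = ∫ x in (0:ℝ)..(2 * π), ∫ y in (0:ℝ)..(2 * π), (0:ℝ) := by
      refine intervalIntegral.integral_congr fun x _ =>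
        intervalIntegral.integral_congr fun y hy => ?_
      rw [uIcc_of_le h2π] at hy
      simp [h0 x y hy]
    simpa using this
  have hdF : ∀ s ∈ Ioo 0 t, HasDerivAt
      (fun s => distSq ρ φ c s + κ * (∫ r in (0:ℝ)..s, gradDeltaNormSq δ ρ r) - K * s)
      (deriv (distSq ρ φ c) s + κ * gradDeltaNormSq δ ρ s - K * 1) s := by
    intro s hs
    have hI : HasDerivAt (fun s => ∫ r in (0:ℝ)..s, gradDeltaNormSq δ ρ r)
        (gradDeltaNormSq δ ρ s) s := by
      refine intervalIntegral.integral_hasDerivAt_right ?_ ?_ ?_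
      · refine hint.mono_set ?_
        rw [uIcc_of_le hs.1.le, uIcc_of_le ht]
        exact Icc_subset_Icc_right hs.2.le
      · exact h.continuousOn_grad.stronglyMeasurableAtFilter isOpen_Ioi s hs.1
      · exact h.continuousOn_grad.continuousAt (Ioi_mem_nhds hs.1)
    exact (((h.hasDerivAt_distSq hφ c hs.1).differentiableAt.hasDerivAt).add
      (hI.const_mul κ)).sub ((hasDerivAt_id s).const_mul K)
  have hanti : AntitoneOn
      (fun s => distSq ρ φ c s + κ * (∫ r in (0:ℝ)..s, gradDeltaNormSq δ ρ r) - K * s)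
      (Icc 0 t) := by
    refine antitoneOn_of_deriv_nonpos (convex_Icc 0 t) ?_ ?_ ?_
    · have h1 := (h.continuousOn_distSq hφ c).mono (fun s (hs : s ∈ Icc 0 t) => hs.1)
      have h2 : ContinuousOn (fun s => ∫ r in (0:ℝ)..s, gradDeltaNormSq δ ρ r) (Icc 0 t) := by
        have := intervalIntegral.continuousOn_primitive_interval' hint left_mem_uIcc
        rwa [uIcc_of_le ht] at this
      exact (h1.add (h2.const_mul κ)).sub (by fun_prop)
    · rw [interior_Icc]
      exact fun s hs => (hdF s hs).differentiableAt.differentiableWithinAt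
    · rw [interior_Icc]
      intro s hs
      rw [(hdF s hs).deriv]
      have h1 := h.deriv_distSq_le hδ hκ hM hu hφ hφp hφd hψ hψ2 huφ hs.1
      have h2 := mul_le_mul_of_nonneg_left (h.l2normSq_le hδ hκ hu hs.1.le) hM
      rw [← hE] at h1
      rw [hK]
      linarith
  have := hanti (left_mem_Icc.2 ht) (right_mem_Icc.2 ht) ht
  have hnn : 0 ≤ distSq ρ φ c t := torusInt_nonneg fun x y => sq_nonneg _
  simp only [hd0, intervalIntegral.integral_same] at this
  linarith

end IsShearSolution

/-! ### The tent profile -/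

/-- On `[0,2π]` the periodic tent of half-width `a` is the sum of a decreasing ramp at `0` and an
increasing ramp at `2π`. -/
def ramps (a y : ℝ) : ℝ := max 0 (1 - y / a) + max 0 (1 - (2 * π - y) / a)

/-- The right derivative of `ramps a`. -/
def rampsDeriv (a y : ℝ) : ℝ :=
  (Iio a).indicator (fun _ => -(1 / a)) y + (Ici (2 * π - a)).indicator (fun _ => 1 / a) y

lemma continuous_ramps (a : ℝ) : Continuous (ramps a) := by
  unfold ramps; fun_prop

lemma ramps_eq_tentPer {κ β : ℝ} (ha : 0 < κ ^ β) (ha1 : κ ^ β < 1) {y : ℝ}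
    (hy : y ∈ Icc 0 (2 * π)) : tentPer κ β y = ramps (κ ^ β) y := by
  have hπ := Real.pi_gt_three
  obtain ⟨hy0, hy1⟩ := hy
  set a := κ ^ β with hadef
  unfold tentPer ramps
  rw [← hadef]
  rcases lt_or_ge y π with hlt | hge
  · have hfl : ⌊(y + π) / (2 * π)⌋ = 0 := by
      rw [Int.floor_eq_iff]
      constructor
      · simp; positivity
      · rw [div_lt_iff₀ (by positivity)]; push_cast; linarith
    have hm : mod2pi y = y := by simp [mod2pi, hfl]
    have h2 : 1 - (2 * π - y) / a ≤ 0 := by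
      rw [sub_nonpos, le_div_iff₀ ha]; linarith
    rw [hm, abs_of_nonneg hy0, max_eq_left h2, add_zero]
    split_ifs with hc
    · rw [max_eq_right (by rw [sub_nonneg, div_le_iff₀ ha]; linarith)]; field_simp
    · rw [max_eq_left (by rw [sub_nonpos, le_div_iff₀ ha]; linarith)]
  · have hfl : ⌊(y + π) / (2 * π)⌋ = 1 := by
      rw [Int.floor_eq_iff]
      constructor
      · rw [le_div_iff₀ (by positivity)]; push_cast; linarith
      · rw [div_lt_iff₀ (by positivity)]; push_cast; linarith
    have hm : mod2pi y = y - 2 * π := by simp [mod2pi, hfl]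
    have h2 : 1 - y / a ≤ 0 := by
      rw [sub_nonpos, le_div_iff₀ ha]; linarith
    rw [hm, abs_of_nonpos (by linarith), max_eq_left h2, zero_add, neg_sub]
    split_ifs with hc
    · rw [max_eq_right (by rw [sub_nonneg, div_le_iff₀ ha]; linarith)]; field_simp
    · rw [max_eq_left (by rw [sub_nonpos, le_div_iff₀ ha]; linarith)]

lemma ramps_periodic {a : ℝ} : ramps a (2 * π) = ramps a 0 := by
  simp [ramps, add_comm]

lemma hasDerivWithinAt_ramps {a : ℝ} (ha : 0 < a) (y : ℝ) :
    HasDerivWithinAt (ramps a) (rampsDeriv a y) (Ioi y) y := by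
  have l1 : ∀ z : ℝ, HasDerivAt (fun z => 1 - z / a) (-(1 / a)) z := fun z =>
    ((hasDerivAt_id z).div_const a).const_sub 1
  have l2 : ∀ z : ℝ, HasDerivAt (fun z => 1 - (2 * π - z) / a) (1 / a) z := fun z =>
    ((((hasDerivAt_id z).const_sub (2 * π)).div_const a).const_sub 1).congr_deriv (by ring)
  refine HasDerivWithinAt.add ?_ ?_
  · rcases lt_or_ge y a with h | h
    · rw [indicator_of_mem (show y ∈ Iio a from h)]
      refine ((l1 y).congr_of_eventuallyEq ?_).hasDerivWithinAt
      filter_upwards [gt_mem_nhds h] with z hz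
      exact max_eq_right (by rw [sub_nonneg, div_le_iff₀ ha]; linarith)
    · rw [indicator_of_notMem (show y ∉ Iio a from not_lt.2 h)]
      refine (hasDerivWithinAt_const y (Ioi y) (0:ℝ)).congr (fun z hz => ?_) ?_
      · have : y < z := hz
        exact max_eq_left (by rw [sub_nonpos, le_div_iff₀ ha]; linarith)
      · exact max_eq_left (by rw [sub_nonpos, le_div_iff₀ ha]; linarith)
  · rcases lt_or_ge y (2 * π - a) with h | h
    · rw [indicator_of_notMem (show y ∉ Ici (2 * π - a) from not_le.2 h)]
      refine ((hasDerivAt_const y (0:ℝ)).congr_of_eventuallyEq ?_).hasDerivWithinAt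
      filter_upwards [gt_mem_nhds h] with z hz
      exact max_eq_left (by rw [sub_nonpos, le_div_iff₀ ha]; linarith)
    · rw [indicator_of_mem (show y ∈ Ici (2 * π - a) from h)]
      refine (l2 y).hasDerivWithinAt.congr (fun z hz => ?_) ?_
      · have : y < z := hz
        exact max_eq_right (by rw [sub_nonneg, div_le_iff₀ ha]; linarith)
      · exact max_eq_right (by rw [sub_nonneg, div_le_iff₀ ha]; linarith)

lemma intervalIntegrable_indicator_const {s : Set ℝ} (hs : MeasurableSet s) (c a b : ℝ) :
    IntervalIntegrable (s.indicator fun _ => c) volume a b := by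
  rw [intervalIntegrable_iff]
  exact (intervalIntegrable_iff.1 intervalIntegrable_const).indicator hs

lemma intervalIntegrable_rampsDeriv (a : ℝ) :
    IntervalIntegrable (rampsDeriv a) volume 0 (2 * π) :=
  (intervalIntegrable_indicator_const measurableSet_Iio _ _ _).add
    (intervalIntegrable_indicator_const measurableSet_Ici _ _ _)

lemma rampsDeriv_sq {a : ℝ} (ha1 : a < 1) :
    (fun y => rampsDeriv a y ^ 2) = fun y => (Iio a).indicator (fun _ => (1 / a) ^ 2) y +
      (Ici (2 * π - a)).indicator (fun _ => (1 / a) ^ 2) y := by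
  have hπ := Real.pi_gt_three
  funext y
  unfold rampsDeriv
  by_cases h1 : y < a
  · have h2 : ¬ 2 * π - a ≤ y := by linarith
    simp [indicator, h1, h2]
  · by_cases h2 : 2 * π - a ≤ y <;> simp [indicator, h1, h2]

lemma intervalIntegrable_rampsDeriv_sq {a : ℝ} (ha1 : a < 1) :
    IntervalIntegrable (fun y => rampsDeriv a y ^ 2) volume 0 (2 * π) := by
  rw [rampsDeriv_sq ha1]
  exact (intervalIntegrable_indicator_const measurableSet_Iio _ _ _).add
    (intervalIntegrable_indicator_const measurableSet_Ici _ _ _)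

lemma integral_rampsDeriv_sq {a : ℝ} (ha : 0 < a) (ha1 : a < 1) :
    ∫ y in (0:ℝ)..(2 * π), rampsDeriv a y ^ 2 = 2 / a := by
  have hπ := Real.pi_gt_three
  have s1 : Ioc 0 (2 * π) ∩ Iio a = Ioo 0 a := by
    ext z; simp only [mem_inter_iff, mem_Ioc, mem_Iio, mem_Ioo]
    exact ⟨fun h => ⟨h.1.1, h.2⟩, fun h => ⟨⟨h.1, by linarith [h.2]⟩, h.2⟩⟩
  have s2 : Ioc 0 (2 * π) ∩ Ici (2 * π - a) = Icc (2 * π - a) (2 * π) := by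
    ext z; simp only [mem_inter_iff, mem_Ioc, mem_Ici, mem_Icc]
    exact ⟨fun h => ⟨h.2, h.1.2⟩, fun h => ⟨⟨by linarith [h.1], h.2⟩, h.1⟩⟩
  rw [rampsDeriv_sq ha1, intervalIntegral.integral_add
    (intervalIntegrable_indicator_const measurableSet_Iio _ _ _)
    (intervalIntegrable_indicator_const measurableSet_Ici _ _ _),
    intervalIntegral.integral_of_le (by positivity),
    intervalIntegral.integral_of_le (by positivity),
    setIntegral_indicator measurableSet_Iio, setIntegral_indicator measurableSet_Ici, s1, s2,
    setIntegral_const, setIntegral_const, Real.volume_real_Ioo_of_le ha.le,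
    Real.volume_real_Icc_of_le (by linarith)]
  simp only [smul_eq_mul]
  field_simp
  ring

lemma le_integral_ramps_sq {a : ℝ} (ha : 0 < a) (ha1 : a < 1) :
    a / 3 ≤ ∫ y in (0:ℝ)..(2 * π), ramps a y ^ 2 := by
  have hπ := Real.pi_gt_three
  have hc : Continuous fun y => ramps a y ^ 2 := (continuous_ramps a).pow 2
  have e : ∫ y in (0:ℝ)..a, (1 - y / a) ^ 2 = a / 3 := by
    rw [intervalIntegral.integral_eq_sub_of_hasDerivAt (f := fun y => -(a / 3) * (1 - y / a) ^ 3)]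
    · field_simp; ring
    · intro y _
      refine (((((hasDerivAt_id y).div_const a).const_sub 1).pow 3).const_mul
        (-(a / 3))).congr_deriv ?_
      simp only [id]; push_cast; field_simp
    · exact (by fun_prop : Continuous fun y => (1 - y / a) ^ 2).intervalIntegrable _ _
  rw [← intervalIntegral.integral_add_adjacent_intervals (hc.intervalIntegrable 0 a)
    (hc.intervalIntegrable a (2 * π)), ← e]
  have h1 : ∫ y in (0:ℝ)..a, (1 - y / a) ^ 2 ≤ ∫ y in (0:ℝ)..a, ramps a y ^ 2 := by
    refine intervalIntegral.integral_mono_on ha.le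
      ((by fun_prop : Continuous fun y => (1 - y / a) ^ 2).intervalIntegrable _ _)
      (hc.intervalIntegrable _ _) fun y hy => ?_
    have h0 : 0 ≤ 1 - y / a := by rw [sub_nonneg, div_le_iff₀ ha]; linarith [hy.2]
    refine pow_le_pow_left₀ h0 ?_ 2
    unfold ramps
    linarith [le_max_right 0 (1 - y / a), le_max_left 0 (1 - (2 * π - y) / a)]
  have h2 : 0 ≤ ∫ y in a..(2 * π), ramps a y ^ 2 :=
    intervalIntegral.integral_nonneg_of_forall (by linarith) fun y => sq_nonneg _
  linarith

/-- On the support of the tent the shear differs from `u(0)` by at most `L aⁿ`; near `2π` this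
uses the periodicity of `u`. -/
lemma shear_on_ramps {n : ℕ} {L a : ℝ} {u : ℝ → ℝ} (hL : 0 < L) (ha : 0 < a)
    (hup : ∀ y, u (y + 2 * π) = u y) (hu : ∀ z : ℝ, |u z - u 0| ≤ L * |z| ^ n) {y : ℝ}
    (hy : y ∈ Icc 0 (2 * π)) :
    |u y - u 0| * |ramps a y| ≤ L * a ^ n * |ramps a y| := by
  by_cases h1 : y ≤ a
  · refine mul_le_mul_of_nonneg_right ((hu y).trans ?_) (abs_nonneg _)
    rw [abs_of_nonneg hy.1]
    have := hy.1
    gcongr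
  by_cases h2 : 2 * π - y ≤ a
  · refine mul_le_mul_of_nonneg_right ?_ (abs_nonneg _)
    have e : u y = u (y - 2 * π) := by rw [← hup (y - 2 * π), sub_add_cancel]
    rw [e]
    refine (hu _).trans ?_
    have hab : |y - 2 * π| ≤ a := by rw [abs_of_nonpos (by linarith [hy.2])]; linarith
    gcongr
  · have : ramps a y = 0 := by
      unfold ramps
      rw [max_eq_left (by rw [sub_nonpos, le_div_iff₀ ha]; linarith),
        max_eq_left (by rw [sub_nonpos, le_div_iff₀ ha]; linarith), add_zero]
    simp [this]

/-- Dissipation upper bound for a shear flow vanishing to order `n` at the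
origin, with initial datum `φ_{κ,β}(y) sin x`, `β = 1/(n+2)`. -/
theorem dissipation_bound_regular_shear (n : ℕ) (hn : 1 ≤ n) (δ : ℝ) (hδ : δ = 0 ∨ δ = 1)
    (L : ℝ) (hL : 0 < L) :
    ∃ C : ℝ, 1 ≤ C ∧ ∀ u : ℝ → ℝ, Continuous u → (∀ y, u (y + 2 * π) = u y) →
      (∀ z : ℝ, |u z - u 0| ≤ L * |z| ^ n) →
      ∀ κ ∈ Set.Ioo (0:ℝ) 1, ∀ ρ : ℝ → ℝ → ℝ → ℝ, IsShearSolution δ κ u ρ →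
      (∀ x y : ℝ, ρ 0 x y = tentPer κ (1 / (n + 2)) y * Real.sin x) →
      ∀ t : ℝ, 0 ≤ t →
        κ * ∫ s in (0:ℝ)..t, gradDeltaNormSq δ ρ s ≤
          C * l2normSq ρ 0 *
            (κ ^ ((n : ℝ) / (n + 2)) * t + (κ ^ ((n : ℝ) / (n + 2)) * t) ^ 2 +
              (κ ^ ((n : ℝ) / (n + 2)) * t) ^ (n + 2)) := by
  refine ⟨2 * L + 7, by linarith, ?_⟩
  rintro u hu hup huL κ ⟨hκ0, hκ1⟩ ρ hρ h0 t ht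
  have hδ0 : 0 ≤ δ := by rcases hδ with rfl | rfl <;> norm_num
  have hδ1 : δ ≤ 1 := by rcases hδ with rfl | rfl <;> norm_num
  have hn2 : (0:ℝ) < (n:ℝ) + 2 := by positivity
  set a : ℝ := κ ^ (1 / ((n:ℝ) + 2)) with hadef
  set q : ℝ := κ ^ ((n:ℝ) / (n + 2)) with hqdef
  have ha : 0 < a := rpow_pos_of_pos hκ0 _
  have ha1 : a < 1 := rpow_lt_one hκ0.le hκ1 (by positivity)
  have hq : 0 < q := rpow_pos_of_pos hκ0 _
  have hκq : κ ≤ q := by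
    calc κ = κ ^ (1:ℝ) := (rpow_one κ).symm
      _ ≤ q := rpow_le_rpow_of_exponent_ge hκ0 hκ1.le (by rw [div_le_one hn2]; linarith)
  have han : a ^ n = q := by
    rw [hadef, hqdef, ← rpow_natCast, ← rpow_mul hκ0.le]
    congr 1; field_simp
  have haq : q * a ^ 2 = κ := by
    rw [hadef, hqdef, ← rpow_natCast, ← rpow_mul hκ0.le, ← rpow_add hκ0]
    have : (n:ℝ) / (n + 2) + 1 / (n + 2) * (2:ℕ) = 1 := by push_cast; field_simp
    rw [this, rpow_one]
  have h0' : ∀ x, ∀ y ∈ Icc 0 (2 * π), ρ 0 x y = ramps a y * Real.sin x := fun x y hy => by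
    rw [h0, ramps_eq_tentPer ha ha1 hy]
  have main := hρ.dissipation_le (c := u 0) (M := L * a ^ n) hδ0 hκ0.le (by positivity) hu
    (continuous_ramps a) ramps_periodic (fun y _ => hasDerivWithinAt_ramps ha y)
    (intervalIntegrable_rampsDeriv a) (intervalIntegrable_rampsDeriv_sq ha1)
    (fun y hy => shear_on_ramps hL ha hup huL hy) h0' ht
  have hE : π * (a / 3) ≤ l2normSq ρ 0 := by
    have e : l2normSq ρ 0 = torusInt (fun x y => ramps a y ^ 2 * sin (x - 0) ^ 2) := by
      refine intervalIntegral.integral_congr fun x _ =>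
        intervalIntegral.integral_congr fun y hy => ?_
      rw [uIcc_of_le (by positivity)] at hy
      simp only [h0' x y hy, sub_zero]; ring
    rw [e, torusInt_sep_sin]
    exact mul_le_mul_of_nonneg_left (le_integral_ramps_sq ha ha1) pi_pos.le
  rw [integral_rampsDeriv_sq ha ha1, han] at main
  have hE0 : 0 ≤ l2normSq ρ 0 := le_trans (by positivity) hE
  -- The gradient of the tent costs `κ · 2π/a = 6 q (π a/3)`, since `κ = q a²`.
  have hP : κ * (π * (2 / a)) ≤ 6 * q * l2normSq ρ 0 := by
    have : κ * (π * (2 / a)) = 6 * q * (π * (a / 3)) := by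
      rw [← haq]; field_simp; ring
    rw [this]
    exact mul_le_mul_of_nonneg_left hE (by positivity)
  have hκδ : κ * δ * l2normSq ρ 0 ≤ q * l2normSq ρ 0 :=
    mul_le_mul_of_nonneg_right ((mul_le_of_le_one_right hκ0.le hδ1).trans hκq) hE0
  calc κ * ∫ s in (0:ℝ)..t, gradDeltaNormSq δ ρ s
      ≤ _ := main
    _ ≤ ((2 * L + 7) * l2normSq ρ 0 * q) * t := by
        refine mul_le_mul_of_nonneg_right ?_ ht
        linarith
    _ = (2 * L + 7) * l2normSq ρ 0 * (q * t) := by ring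
    _ ≤ (2 * L + 7) * l2normSq ρ 0 * (q * t + (q * t) ^ 2 + (q * t) ^ (n + 2)) := by
        refine mul_le_mul_of_nonneg_left ?_ (by positivity)
        have h1 : 0 ≤ (q * t) ^ 2 := by positivity
        have h2 : 0 ≤ (q * t) ^ (n + 2) := by positivity
        linarith

end
end
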